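/- Let A, Ã ∈ ℝ^{m×r₁}, B, B̃ ∈ ℝ^{m×r₂}, and C, C̃ ∈ ℝ^{p×r₃} all have orthonormal columns, and let y ∈ ℝ^m and x ∈ ℝ^{p·m} (indexed by Fin p × Fin m) be vectors. Then ‖Ãᵀ y xᵀ (C̃ ⊗ B̃) − Aᵀ y xᵀ (C ⊗ B)‖_F ≤ ‖y xᵀ‖_F (‖Ã − A‖_F + ‖B̃ − B‖_F + ‖C̃ − C‖_F), where y xᵀ denotes the rank-one matrix (outer product) with ‖y xᵀ‖_F = ‖y‖₂ ‖x‖₂. -/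

import Mathlib

/-!
Telescoping one factor at a time writes the difference as three products, each with a single
perturbed factor. Since `C ⊗ B` acts on vectorized matrices by `X ↦ B X Cᵀ`, its spectral norm
is at most `‖C‖ ‖B‖`, so each of these products is controlled by the Frobenius norm of the data
matrix times the spectral norms of the three factors. A matrix with orthonormal columns has
spectral norm at most one, and the spectral norm of the perturbed factor is bounded by its
Frobenius norm.
-/

open Matrix
open scoped Kronecker

/-- The Euclidean (ℓ²) norm of a real vector. -/
noncomputable def euclNorm {n : Type*} [Fintype n] (v : n → ℝ) : ℝ :=
  Real.sqrt (∑ i, (v i) ^ 2)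

/-- The Frobenius norm of a real matrix. -/
noncomputable def frobNorm {m n : Type*} [Fintype m] [Fintype n] (A : Matrix m n ℝ) : ℝ :=
  Real.sqrt (∑ i, ∑ j, (A i j) ^ 2)

section Algebra

variable {l m n p k₁ k₂ k₃ R : Type*}

lemma kronecker_sub_kronecker [NonUnitalNonAssocRing R]
    (A A' : Matrix l m R) (B B' : Matrix n p R) :
    A' ⊗ₖ B' - A ⊗ₖ B = A' ⊗ₖ (B' - B) + (A' - A) ⊗ₖ B := by
  ext
  simp [mul_sub, sub_mul]

lemma transpose_mul_mul_kronecker_sub [Fintype m] [Fintype n] [Fintype p] [NonUnitalNonAssocRing R]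
    (A A' : Matrix m k₁ R) (B B' : Matrix n k₂ R) (C C' : Matrix p k₃ R)
    (M : Matrix m (p × n) R) :
    A'ᵀ * M * (C' ⊗ₖ B') - Aᵀ * M * (C ⊗ₖ B) =
      (A' - A)ᵀ * M * (C' ⊗ₖ B') + Aᵀ * M * (C' ⊗ₖ (B' - B)) + Aᵀ * M * ((C' - C) ⊗ₖ B) := by
  rw [add_assoc, ← Matrix.mul_add, ← kronecker_sub_kronecker, transpose_sub]
  simp only [Matrix.sub_mul, Matrix.mul_sub, sub_add_sub_cancel]

end Algebra

section Norms

open scoped Matrix.Norms.L2Operator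

variable {l m n p : Type*} [Fintype l] [Fintype m] [Fintype n] [Fintype p]

lemma euclNorm_eq_norm_toLp (v : n → ℝ) : euclNorm v = ‖WithLp.toLp 2 v‖ := by
  simp [euclNorm, EuclideanSpace.norm_eq]

lemma euclNorm_nonneg (v : n → ℝ) : 0 ≤ euclNorm v :=
  Real.sqrt_nonneg _

lemma euclNorm_sq (v : n → ℝ) : euclNorm v ^ 2 = ∑ i, v i ^ 2 :=
  Real.sq_sqrt (by positivity)

lemma frobNorm_nonneg (A : Matrix m n ℝ) : 0 ≤ frobNorm A :=
  Real.sqrt_nonneg _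

lemma frobNorm_sq_eq_sum_row (A : Matrix m n ℝ) : frobNorm A ^ 2 = ∑ i, euclNorm (A.row i) ^ 2 := by
  simp only [euclNorm_sq, row_apply]
  exact Real.sq_sqrt (by positivity)

lemma frobNorm_transpose (A : Matrix m n ℝ) : frobNorm Aᵀ = frobNorm A :=
  congrArg Real.sqrt Finset.sum_comm

lemma frobNorm_sq_eq_sum_col (A : Matrix m n ℝ) : frobNorm A ^ 2 = ∑ j, euclNorm (A.col j) ^ 2 := by
  rw [← frobNorm_transpose, frobNorm_sq_eq_sum_row]
  rfl

lemma euclNorm_vec (A : Matrix m n ℝ) : euclNorm (vec A) = frobNorm A := by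
  rw [← frobNorm_transpose, euclNorm, frobNorm, Fintype.sum_prod_type]
  rfl

lemma frobNorm_add_le (A B : Matrix m n ℝ) : frobNorm (A + B) ≤ frobNorm A + frobNorm B := by
  simp only [← euclNorm_vec, euclNorm_eq_norm_toLp, vec_add, WithLp.toLp_add]
  exact norm_add_le _ _

lemma frobNorm_vecMulVec (y : m → ℝ) (x : n → ℝ) :
    frobNorm (vecMulVec y x) = euclNorm y * euclNorm x := by
  rw [frobNorm, euclNorm, euclNorm, ← Real.sqrt_mul (by positivity), Finset.sum_mul_sum]
  simp only [vecMulVec_apply, mul_pow]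

lemma euclNorm_mulVec_le_frobNorm_mul (A : Matrix m n ℝ) (x : n → ℝ) :
    euclNorm (A *ᵥ x) ≤ frobNorm A * euclNorm x := by
  refine le_of_sq_le_sq ?_ (mul_nonneg (frobNorm_nonneg A) (euclNorm_nonneg x))
  rw [mul_pow, frobNorm_sq_eq_sum_row, Finset.sum_mul, euclNorm_sq]
  gcongr with i
  rw [euclNorm_sq, euclNorm_sq]
  exact Finset.sum_mul_sq_le_sq_mul_sq _ _ _

lemma euclNorm_mulVec_le_l2_opNorm_mul [DecidableEq n] (A : Matrix m n ℝ) (x : n → ℝ) :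
    euclNorm (A *ᵥ x) ≤ ‖A‖ * euclNorm x := by
  simp only [euclNorm_eq_norm_toLp]
  exact l2_opNorm_mulVec A (WithLp.toLp 2 x)

lemma l2_opNorm_le_of_euclNorm_mulVec_le [DecidableEq n] {A : Matrix m n ℝ} {c : ℝ} (hc : 0 ≤ c)
    (h : ∀ x, euclNorm (A *ᵥ x) ≤ c * euclNorm x) : ‖A‖ ≤ c := by
  simp only [euclNorm_eq_norm_toLp] at h
  exact ContinuousLinearMap.opNorm_le_bound _ hc fun x => h x.ofLp

lemma l2_opNorm_le_frobNorm [DecidableEq n] (A : Matrix m n ℝ) : ‖A‖ ≤ frobNorm A :=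
  l2_opNorm_le_of_euclNorm_mulVec_le (frobNorm_nonneg A) (euclNorm_mulVec_le_frobNorm_mul A)

lemma l2_opNorm_transpose [DecidableEq m] [DecidableEq n] (A : Matrix m n ℝ) : ‖Aᵀ‖ = ‖A‖ := by
  rw [← conjTranspose_eq_transpose_of_trivial, l2_opNorm_conjTranspose]

lemma l2_opNorm_le_one_of_conjTranspose_mul_self_eq_one {𝕜 : Type*} [RCLike 𝕜] [DecidableEq n]
    {A : Matrix m n 𝕜} (hA : Aᴴ * A = 1) : ‖A‖ ≤ 1 := by
  rw [← sq_le_one_iff₀ (norm_nonneg A)]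
  calc ‖A‖ ^ 2 = ‖(1 : Matrix n n 𝕜)‖ := by rw [sq, ← l2_opNorm_conjTranspose_mul_self, hA]
    _ = ‖fun _ : n => (1 : 𝕜)‖ := by rw [← diagonal_one, l2_opNorm_diagonal]
    _ ≤ 1 := (pi_norm_const_le (1 : 𝕜)).trans_eq norm_one

lemma l2_opNorm_le_one_of_transpose_mul_self_eq_one [DecidableEq n] {A : Matrix m n ℝ}
    (hA : Aᵀ * A = 1) : ‖A‖ ≤ 1 :=
  l2_opNorm_le_one_of_conjTranspose_mul_self_eq_one
    (by rwa [conjTranspose_eq_transpose_of_trivial])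

lemma frobNorm_mul_le_l2_opNorm_mul [DecidableEq m] (A : Matrix l m ℝ) (X : Matrix m n ℝ) :
    frobNorm (A * X) ≤ ‖A‖ * frobNorm X := by
  refine le_of_sq_le_sq ?_ (mul_nonneg (norm_nonneg A) (frobNorm_nonneg X))
  rw [mul_pow, frobNorm_sq_eq_sum_col, frobNorm_sq_eq_sum_col, Finset.mul_sum]
  gcongr with j
  rw [← mul_pow]
  exact pow_le_pow_left₀ (euclNorm_nonneg _) (euclNorm_mulVec_le_l2_opNorm_mul A (X.col j)) 2

lemma frobNorm_mul_le_mul_l2_opNorm [DecidableEq n] (X : Matrix l m ℝ) (B : Matrix m n ℝ) :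
    frobNorm (X * B) ≤ frobNorm X * ‖B‖ := by
  classical
  rw [← frobNorm_transpose, transpose_mul, ← frobNorm_transpose X, ← l2_opNorm_transpose, mul_comm]
  exact frobNorm_mul_le_l2_opNorm_mul Bᵀ Xᵀ

lemma l2_opNorm_kronecker_le [DecidableEq m] [DecidableEq p] (A : Matrix l m ℝ)
    (B : Matrix n p ℝ) : ‖A ⊗ₖ B‖ ≤ ‖A‖ * ‖B‖ := by
  classical
  refine l2_opNorm_le_of_euclNorm_mulVec_le (by positivity) fun x => ?_
  obtain ⟨X, rfl⟩ := vec_bijective.surjective x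
  calc euclNorm ((A ⊗ₖ B) *ᵥ vec X)
      = frobNorm (B * X * Aᵀ) := by rw [kronecker_mulVec_vec, euclNorm_vec]
    _ ≤ frobNorm (B * X) * ‖Aᵀ‖ := frobNorm_mul_le_mul_l2_opNorm _ _
    _ ≤ ‖B‖ * frobNorm X * ‖Aᵀ‖ := by grw [frobNorm_mul_le_l2_opNorm_mul]
    _ = ‖A‖ * ‖B‖ * euclNorm (vec X) := by rw [l2_opNorm_transpose, euclNorm_vec]; ring

end Norms

section Perturbation

open scoped Matrix.Norms.L2Operator

variable {m n p k₁ k₂ k₃ : Type*} [Fintype m] [Fintype n] [Fintype p]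
  [Fintype k₁] [Fintype k₂] [Fintype k₃] [DecidableEq k₁] [DecidableEq k₂] [DecidableEq k₃]

lemma frobNorm_transpose_mul_mul_kronecker_le (A : Matrix m k₁ ℝ) (B : Matrix n k₂ ℝ)
    (C : Matrix p k₃ ℝ) (M : Matrix m (p × n) ℝ) :
    frobNorm (Aᵀ * M * (C ⊗ₖ B)) ≤ frobNorm M * (‖A‖ * ‖B‖ * ‖C‖) := by
  classical
  calc frobNorm (Aᵀ * M * (C ⊗ₖ B))
      ≤ frobNorm (Aᵀ * M) * ‖C ⊗ₖ B‖ := frobNorm_mul_le_mul_l2_opNorm _ _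
    _ ≤ ‖Aᵀ‖ * frobNorm M * (‖C‖ * ‖B‖) :=
      mul_le_mul (frobNorm_mul_le_l2_opNorm_mul _ _) (l2_opNorm_kronecker_le _ _)
        (norm_nonneg _) (mul_nonneg (norm_nonneg _) (frobNorm_nonneg _))
    _ = frobNorm M * (‖A‖ * ‖B‖ * ‖C‖) := by rw [l2_opNorm_transpose]; ring

theorem rank_one_three_factor_perturbation_general
    {A At : Matrix m k₁ ℝ} {B Bt : Matrix n k₂ ℝ} {C Ct : Matrix p k₃ ℝ}
    (hA : ‖A‖ ≤ 1) (hB : ‖B‖ ≤ 1) (hBt : ‖Bt‖ ≤ 1) (hCt : ‖Ct‖ ≤ 1) (M : Matrix m (p × n) ℝ) :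
    frobNorm (Atᵀ * M * (Ct ⊗ₖ Bt) - Aᵀ * M * (C ⊗ₖ B))
      ≤ frobNorm M * (‖At - A‖ + ‖Bt - B‖ + ‖Ct - C‖) := by
  have hM : 0 ≤ frobNorm M := frobNorm_nonneg M
  rw [transpose_mul_mul_kronecker_sub]
  calc _ ≤ frobNorm ((At - A)ᵀ * M * (Ct ⊗ₖ Bt)) + frobNorm (Aᵀ * M * (Ct ⊗ₖ (Bt - B)))
        + frobNorm (Aᵀ * M * ((Ct - C) ⊗ₖ B)) := by grw [frobNorm_add_le, frobNorm_add_le]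
    _ ≤ frobNorm M * (‖At - A‖ * ‖Bt‖ * ‖Ct‖) + frobNorm M * (‖A‖ * ‖Bt - B‖ * ‖Ct‖)
        + frobNorm M * (‖A‖ * ‖B‖ * ‖Ct - C‖) := by
      gcongr <;> exact frobNorm_transpose_mul_mul_kronecker_le _ _ _ _
    _ ≤ frobNorm M * (‖At - A‖ * 1 * 1) + frobNorm M * (1 * ‖Bt - B‖ * 1)
        + frobNorm M * (1 * 1 * ‖Ct - C‖) := by gcongr
    _ = frobNorm M * (‖At - A‖ + ‖Bt - B‖ + ‖Ct - C‖) := by ring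

end Perturbation

/-- Three-factor perturbation bound for rank-one data matrices: if all factor
matrices have orthonormal columns, then
`‖Ãᵀ y xᵀ (C̃ ⊗ B̃) − Aᵀ y xᵀ (C ⊗ B)‖_F
  ≤ ‖y xᵀ‖_F (‖Ã − A‖_F + ‖B̃ − B‖_F + ‖C̃ − C‖_F)`,
where `y xᵀ` is the rank-one outer product with `‖y xᵀ‖_F = ‖y‖₂‖x‖₂`. -/
theorem rank_one_three_factor_perturbation
    (m p r₁ r₂ r₃ : ℕ)
    (A At : Matrix (Fin m) (Fin r₁) ℝ)
    (B Bt : Matrix (Fin m) (Fin r₂) ℝ)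
    (C Ct : Matrix (Fin p) (Fin r₃) ℝ)
    (hA : Aᵀ * A = 1) (hAt : Atᵀ * At = 1)
    (hB : Bᵀ * B = 1) (hBt : Btᵀ * Bt = 1)
    (hC : Cᵀ * C = 1) (hCt : Ctᵀ * Ct = 1)
    (y : Fin m → ℝ) (x : Fin p × Fin m → ℝ) :
    frobNorm (Matrix.vecMulVec y x) = euclNorm y * euclNorm x ∧
    frobNorm (Atᵀ * Matrix.vecMulVec y x * (Ct ⊗ₖ Bt)
              - Aᵀ * Matrix.vecMulVec y x * (C ⊗ₖ B))
      ≤ frobNorm (Matrix.vecMulVec y x)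
          * (frobNorm (At - A) + frobNorm (Bt - B) + frobNorm (Ct - C)) := by
  refine ⟨frobNorm_vecMulVec y x, (rank_one_three_factor_perturbation_general
    (l2_opNorm_le_one_of_transpose_mul_self_eq_one hA)
    (l2_opNorm_le_one_of_transpose_mul_self_eq_one hB)
    (l2_opNorm_le_one_of_transpose_mul_self_eq_one hBt)
    (l2_opNorm_le_one_of_transpose_mul_self_eq_one hCt) (vecMulVec y x)).trans ?_⟩
  gcongr
  exacts [frobNorm_nonneg _, l2_opNorm_le_frobNorm _, l2_opNorm_le_frobNorm _,
    l2_opNorm_le_frobNorm _]
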